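/- arXiv:2509.05137 — 2 statements merged into one kernel-verified Lean document; each statement's English description precedes it below -/
import Mathlib

section
/- For every superlinear function g : ℕ → ℕ and every α ≥ 1, the class C_g is not adaptively subtractively α-robustly learnable; moreover, there exists an adaptive subtractive adversary V_sub with fixed constant budget that is a universal α-adversary for C_g. -/
open scoped ENNReal NNReal

/-- Total variation distance between two discrete distributions. -/
noncomputable def tv {X : Type*} (p q : PMF X) : ℝ :=
  (∑' x, |(p x).toReal - (q x).toReal|) / 2

/-- The distribution of an i.i.d. sample of size `m` from `p`, viewed as a multiset. -/
noncomputable def iid {X : Type*} (p : PMF X) : ℕ → PMF (Multiset X)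
  | 0 => PMF.pure 0
  | n + 1 => (iid p n).bind fun s => p.map fun x => x ::ₘ s

/-- `|Q|^m` : first draw `q ∼ Q`, then an i.i.d. sample `S ∼ q^m`. -/
noncomputable def metaSample {X : Type*} (Q : PMF (PMF X)) (m : ℕ) : PMF (Multiset X) :=
  Q.bind fun q => iid q m

/-- An adaptive adversary: a randomized map from samples (finite multisets) to samples. -/
abbrev Adversary (X : Type*) := Multiset X → PMF (Multiset X)

/-- `V(P)`: the distribution of `V S` for `S ∼ P` (including internal randomness). -/
noncomputable def advPush {X : Type*} (V : Adversary X) (P : PMF (Multiset X)) :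
    PMF (Multiset X) := P.bind V

/-- An additive adversary only adds points: `S ⊆ V(S)` almost surely. -/
def IsAdditive {X : Type*} (V : Adversary X) : Prop :=
  ∀ S T, T ∈ (V S).support → S ≤ T

/-- A subtractive adversary only removes points: `V(S) ⊆ S` almost surely. -/
def IsSubtractive {X : Type*} (V : Adversary X) : Prop :=
  ∀ S T, T ∈ (V S).support → T ≤ S

/-- Fixed constant budget `η`: `|V(S)|` depends only on `|S|` (via `c`), and for every `m`,
`η m − 1 < m·budget(V,m) ≤ η m` where `m·budget(V,m) = ||V(S)| − |S||`. -/
def FixedBudget {X : Type*} (V : Adversary X) (η : ℝ) : Prop :=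
  ∃ c : ℕ → ℕ, (∀ S T, T ∈ (V S).support → Multiset.card T = c (Multiset.card S)) ∧
    ∀ m : ℕ, η * m - 1 < |(c m : ℝ) - m| ∧ |(c m : ℝ) - m| ≤ η * m

/-- Fixed constant budget `η` for an additive adversary (`m·budget(V,m) = |V(S)| − |S|`). -/
def FixedBudgetAdd {X : Type*} (V : Adversary X) (η : ℝ) : Prop :=
  ∃ c : ℕ → ℕ, (∀ S T, T ∈ (V S).support → Multiset.card T = c (Multiset.card S)) ∧
    ∀ m : ℕ, η * m - 1 < (c m : ℝ) - m ∧ (c m : ℝ) - m ≤ η * m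

/-- Fixed constant budget `η` for a subtractive adversary (`m·budget(V,m) = |S| − |V(S)|`). -/
def FixedBudgetSub {X : Type*} (V : Adversary X) (η : ℝ) : Prop :=
  ∃ c : ℕ → ℕ, (∀ S T, T ∈ (V S).support → Multiset.card T = c (Multiset.card S)) ∧
    ∀ m : ℕ, η * m - 1 < (m : ℝ) - c m ∧ (m : ℝ) - c m ≤ η * m

/-- Probability of an event under a discrete distribution. -/
noncomputable def probEvent {β : Type*} (P : PMF β) (E : Set β) : ℝ≥0∞ :=
  P.toOuterMeasure E

/-- `A` with sample complexity `mc` learns the class `C` against adversary `V`,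
up to error `bound + ε` with confidence `1 − δ` once `m ≥ mc ε δ`. -/
def RobustLearnerFor {X : Type*} (C : Set (PMF X)) (A : Multiset X → PMF X)
    (mc : ℝ → ℝ → ℕ) (V : Adversary X) (bound : ℝ) : Prop :=
  ∀ p ∈ C, ∀ ε δ : ℝ, 0 < ε → ε < 1 → 0 < δ → δ < 1 →
    ∀ m : ℕ, mc ε δ ≤ m →
      1 - ENNReal.ofReal δ ≤
        probEvent ((iid p m).bind V) {T | tv (A T) p ≤ bound + ε}

/-- `C` is adaptively α-robustly learnable w.r.t. the single adversary `V` with budget `η`. -/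
def RobustlyLearnableWrt {X : Type*} (C : Set (PMF X)) (α : ℝ)
    (V : Adversary X) (η : ℝ) : Prop :=
  ∃ A mc, RobustLearnerFor C A mc V (α * η)

/-- `V` (with budget `η`) is a universal α-adversary for `C`. -/
def UniversalAdversary {X : Type*} (C : Set (PMF X)) (α : ℝ)
    (V : Adversary X) (η : ℝ) : Prop :=
  ¬ RobustlyLearnableWrt C α V η

/-- `C` is adaptively α-robustly learnable w.r.t. a class `𝒱` of adversaries
(each given with its budget). -/
def RobustlyLearnableWrtClass {X : Type*} (C : Set (PMF X)) (α : ℝ)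
    (𝒱 : Set (Adversary X × ℝ)) : Prop :=
  ∃ A mc, ∀ Vη ∈ 𝒱, RobustLearnerFor C A mc Vη.1 (α * Vη.2)

/-- `C` is adaptively additively α-robustly learnable: one learner works simultaneously
against all additive adaptive adversaries with fixed constant budgets. -/
def AdditivelyRobustlyLearnable {X : Type*} (C : Set (PMF X)) (α : ℝ) : Prop :=
  ∃ A mc, ∀ V : Adversary X, ∀ η : ℝ, 0 < η → η < 1 →
    IsAdditive V → FixedBudgetAdd V η → RobustLearnerFor C A mc V (α * η)

/-- `C` is adaptively subtractively α-robustly learnable. -/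
def SubtractivelyRobustlyLearnable {X : Type*} (C : Set (PMF X)) (α : ℝ) : Prop :=
  ∃ A mc, ∀ V : Adversary X, ∀ η : ℝ, 0 < η → η < 1 →
    IsSubtractive V → FixedBudgetSub V η → RobustLearnerFor C A mc V (α * η)

/-- The pair `(V1, V2)` successfully `(γ,ζ)`-confuses `C`-generated samples of size `m`. -/
def ConfusesPair {X : Type*} (C : Set (PMF X)) (V1 V2 : Adversary X)
    (γ ζ : ℝ) (m : ℕ) : Prop :=
  ∃ p ∈ C, ∃ Q : PMF (PMF X), Q.support ⊆ C ∧
    (∀ q ∈ Q.support, γ < tv p q) ∧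
    tv (advPush V1 (metaSample Q m)) (advPush V2 (iid p m)) < ζ

/-- A single adversary `V` successfully `(γ,ζ)`-confuses `C`-generated samples of size `m`. -/
def Confuses {X : Type*} (C : Set (PMF X)) (V : Adversary X) (γ ζ : ℝ) (m : ℕ) : Prop :=
  ConfusesPair C V V γ ζ m

/-- `p` is the distribution `p_{i,j,k} = (1 − 1/j)·δ_{(0,0)} + (1/j − 1/k)·U_{B_i×{2j+1}}
 + (1/k)·δ_{(i,2j+2)}` on `ℕ × ℕ`. -/
def IsPijk (B : ℕ → Finset ℕ) (i j k : ℕ) (p : PMF (ℕ × ℕ)) : Prop :=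
  ∀ x : ℕ × ℕ,
    p x = (1 - ((j : ℝ≥0∞))⁻¹) * (if x = (0, 0) then 1 else 0)
      + (((j : ℝ≥0∞))⁻¹ - ((k : ℝ≥0∞))⁻¹) *
          (if x.1 ∈ B i ∧ x.2 = 2 * j + 1 then (((B i).card : ℝ≥0∞))⁻¹ else 0)
      + ((k : ℝ≥0∞))⁻¹ * (if x = (i, 2 * j + 2) then 1 else 0)

/-- The class `C_g = {p_{i,j,g(j)} : i, j ∈ ℕ}` (for the meaningful parameters). -/
def Cg (B : ℕ → Finset ℕ) (g : ℕ → ℕ) : Set (PMF (ℕ × ℕ)) :=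
  {p | ∃ i j : ℕ, 1 ≤ j ∧ j < g j ∧ (B i).Nonempty ∧ IsPijk B i j (g j) p}

/-- `g` is superlinear: `g(n)/n → ∞`. -/
def Superlinear (g : ℕ → ℕ) : Prop :=
  Filter.Tendsto (fun n => (g n : ℝ) / n) Filter.atTop Filter.atTop

noncomputable def Ex {β : Type*} (P : PMF β) (h : β → ℝ≥0∞) : ℝ≥0∞ := ∑' x, P x * h x

theorem Ex_bind {β γ : Type*} (P : PMF β) (f : β → PMF γ) (h : γ → ℝ≥0∞) :
    Ex (P.bind f) h = Ex P (fun a => Ex (f a) h) := by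
  unfold Ex
  simp only [PMF.bind_apply, ← ENNReal.tsum_mul_left, ← ENNReal.tsum_mul_right]
  rw [ENNReal.tsum_comm]
  simp only [mul_assoc]

theorem Ex_pure {β : Type*} (b : β) (h : β → ℝ≥0∞) : Ex (PMF.pure b) h = h b := by
  unfold Ex
  rw [tsum_eq_single b]
  · simp
  · intro c hc; simp [hc]

theorem Ex_map {β γ : Type*} (P : PMF β) (f : β → γ) (h : γ → ℝ≥0∞) :
    Ex (P.map f) h = Ex P (fun a => h (f a)) := by
  rw [← PMF.bind_pure_comp, Ex_bind]
  simp [Ex_pure]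

theorem Ex_const {β : Type*} (P : PMF β) (c : ℝ≥0∞) : Ex P (fun _ => c) = c := by
  unfold Ex
  rw [ENNReal.tsum_mul_right, P.tsum_coe, one_mul]

theorem Ex_add {β : Type*} (P : PMF β) (f h : β → ℝ≥0∞) :
    Ex P (fun x => f x + h x) = Ex P f + Ex P h := by
  unfold Ex
  simp only [mul_add]
  exact ENNReal.tsum_add

theorem Ex_mul_right {β : Type*} (P : PMF β) (f : β → ℝ≥0∞) (c : ℝ≥0∞) :
    Ex P (fun x => f x * c) = Ex P f * c := by
  unfold Ex
  simp only [← mul_assoc]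
  exact ENNReal.tsum_mul_right

theorem Ex_mono {β : Type*} (P : PMF β) (f h : β → ℝ≥0∞) (H : ∀ x ∈ P.support, f x ≤ h x) :
    Ex P f ≤ Ex P h := by
  refine ENNReal.tsum_le_tsum fun x => ?_
  by_cases hx : x ∈ P.support
  · gcongr; exact H x hx
  · simp [(PMF.apply_eq_zero_iff P x).2 hx]

theorem Ex_sum {β ι : Type*} (P : PMF β) (s : Finset ι) (f : ι → β → ℝ≥0∞) :
    ∑ i ∈ s, Ex P (f i) = Ex P (fun x => ∑ i ∈ s, f i x) := by
  unfold Ex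
  simp only [Finset.mul_sum]
  exact (Summable.tsum_finsetSum (fun i _ => ENNReal.summable)).symm

open Classical in
theorem probEvent_eq_Ex {β : Type*} (P : PMF β) (E : Set β) :
    probEvent P E = Ex P (fun x => if x ∈ E then 1 else 0) := by
  unfold probEvent Ex
  rw [PMF.toOuterMeasure_apply]
  refine tsum_congr fun x => ?_
  by_cases h : x ∈ E <;> simp [h]

theorem iid_map {X Y : Type*} (r : PMF Y) (f : Y → X) (m : ℕ) :
    iid (r.map f) m = (iid r m).map (Multiset.map f) := by
  induction m with
  | zero => simp [iid, PMF.pure_map]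
  | succ n ih =>
    simp only [iid, ih, PMF.bind_map, PMF.map_bind, PMF.map_comp]
    congr 1
    funext s
    simp only [Function.comp]
    congr 1
    funext x
    simp

theorem iid_card {X : Type*} (p : PMF X) (m : ℕ) :
    ∀ S ∈ (iid p m).support, Multiset.card S = m := by
  induction m with
  | zero => intro S hS; simp [iid] at hS; simp [hS]
  | succ n ih =>
    intro S hS
    simp only [iid, PMF.mem_support_bind_iff, PMF.mem_support_map_iff] at hS
    obtain ⟨s, hs, x, _, rfl⟩ := hS
    simp [ih s hs]

theorem Ex_single {Y : Type*} [DecidableEq Y] (r : PMF Y) (y : Y) :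
    Ex r (fun x => if y = x then 1 else 0) = r y := by
  unfold Ex
  rw [tsum_eq_single y]
  · simp
  · intro c hc; simp [Ne.symm hc]

theorem Ex_count {Y : Type*} [DecidableEq Y] (r : PMF Y) (y : Y) (m : ℕ) :
    Ex (iid r m) (fun S => (S.count y : ℝ≥0∞)) = m * r y := by
  induction m with
  | zero => simp [iid, Ex_pure]
  | succ n ih =>
    simp only [iid, Ex_bind, Ex_map, Multiset.count_cons, Nat.cast_add, Nat.cast_ite,
      Nat.cast_one, Nat.cast_zero]
    simp only [Ex_add, Ex_const, Ex_single, ih]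
    ring

theorem pmf_summable {X : Type*} (p : PMF X) : Summable (fun x => (p x).toReal) :=
  ENNReal.summable_toReal (by rw [p.tsum_coe]; simp)

theorem pmf_summable_abs {X : Type*} (p q : PMF X) :
    Summable (fun x => |(p x).toReal - (q x).toReal|) :=
  ((pmf_summable p).sub (pmf_summable q)).abs

/-- combined triangle inequality and lower bound on a finite set -/
theorem tv_tri {X : Type*} (a p q : PMF X) (F : Finset X) (t : ℝ)
    (hp : ∀ x ∈ F, t ≤ (p x).toReal) (hq : ∀ x ∈ F, q x = 0) :
    F.card * t / 2 ≤ tv a p + tv a q := by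
  have h1 : tv a p + tv a q =
      (∑' x, (|(a x).toReal - (p x).toReal| + |(a x).toReal - (q x).toReal|)) / 2 := by
    unfold tv
    rw [Summable.tsum_add (pmf_summable_abs a p) (pmf_summable_abs a q)]
    ring
  rw [h1]
  have h2 := ((pmf_summable_abs a p).add (pmf_summable_abs a q)).sum_le_tsum F
    (fun x _ => by positivity)
  have h3 : F.card * t ≤ ∑ x ∈ F,
      (|(a x).toReal - (p x).toReal| + |(a x).toReal - (q x).toReal|) := by
    rw [← nsmul_eq_mul]
    refine Finset.card_nsmul_le_sum _ _ _ fun x hx => ?_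
    have := hp x hx
    have h0 := hq x hx
    rw [h0]
    have e1 := neg_abs_le ((a x).toReal - (p x).toReal)
    have e2 := le_abs_self ((a x).toReal - (0 : ℝ≥0∞).toReal)
    simp only [ENNReal.toReal_zero] at *
    linarith
  linarith

/-! ### The adversary -/

noncomputable def cOf (η : ℝ) (m : ℕ) : ℕ := m - ⌊η * m⌋₊

def cleanPart (j : ℕ) (S : Multiset (ℕ × ℕ)) : Multiset (ℕ × ℕ) :=
  S.filter (fun x => x.2 ≠ 2 * j + 2)

noncomputable def vmap (η : ℝ) (j : ℕ) (S : Multiset (ℕ × ℕ)) : Multiset (ℕ × ℕ) :=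
  if cOf η (Multiset.card S) ≤ Multiset.card (cleanPart j S) then
    (((cleanPart j S).toList.take (cOf η (Multiset.card S)) : List (ℕ × ℕ)) : Multiset (ℕ × ℕ))
  else ((S.toList.take (cOf η (Multiset.card S)) : List (ℕ × ℕ)) : Multiset (ℕ × ℕ))

theorem take_le {X : Type*} (S : Multiset X) (c : ℕ) :
    ((S.toList.take c : List X) : Multiset X) ≤ S := by
  conv_rhs => rw [← S.coe_toList]
  exact (List.take_sublist c S.toList).subperm

theorem vmap_le (η : ℝ) (j : ℕ) (S : Multiset (ℕ × ℕ)) : vmap η j S ≤ S := by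
  unfold vmap
  split_ifs
  · exact (take_le _ _).trans (Multiset.filter_le _ _)
  · exact take_le _ _

theorem cOf_le (η : ℝ) (m : ℕ) : cOf η m ≤ m := Nat.sub_le _ _

theorem vmap_card (η : ℝ) (j : ℕ) (S : Multiset (ℕ × ℕ)) :
    Multiset.card (vmap η j S) = cOf η (Multiset.card S) := by
  unfold vmap
  split_ifs with h
  · simpa using h
  · simpa using cOf_le _ _

theorem vmap_fixed (η : ℝ) (j : ℕ) (h0 : 0 < η) (h1 : η < 1) :
    FixedBudgetSub (fun S => PMF.pure (vmap η j S)) η := by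
  refine ⟨cOf η, ?_, ?_⟩
  · intro S T hT
    simp at hT
    rw [hT, vmap_card]
  · intro m
    have hm : (0 : ℝ) ≤ η * m := by positivity
    have hf := Nat.floor_le hm
    have hl := Nat.lt_floor_add_one (η * m)
    have hle : ⌊η * m⌋₊ ≤ m := by
      have : η * m ≤ m := by
        have : (0 : ℝ) ≤ m := by positivity
        nlinarith
      exact_mod_cast hf.trans this
    unfold cOf
    rw [Nat.cast_sub hle]
    constructor <;> linarith

theorem vmap_congr (η : ℝ) (j : ℕ) (S S' : Multiset (ℕ × ℕ))
    (hc : Multiset.card S = Multiset.card S') (hf : cleanPart j S = cleanPart j S')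
    (h : cOf η (Multiset.card S) ≤ Multiset.card (cleanPart j S)) :
    vmap η j S = vmap η j S' := by
  unfold vmap
  rw [← hc, ← hf, if_pos h, if_pos h]

/-! ### The base distribution and the hard family -/

noncomputable def baseW (n j k : ℕ) : Option (Option (Fin n)) → ℝ≥0∞
  | none => 1 - (j : ℝ≥0∞)⁻¹
  | some none => (k : ℝ≥0∞)⁻¹
  | some (some _) => ((j : ℝ≥0∞)⁻¹ - (k : ℝ≥0∞)⁻¹) * (n : ℝ≥0∞)⁻¹

theorem baseW_sum (n j k : ℕ) (hn : 0 < n) (hj : 1 ≤ j) (hjk : j < k) :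
    ∑ y, baseW n j k y = 1 := by
  rw [Fintype.sum_option, Fintype.sum_option]
  simp only [baseW, Finset.sum_const, Finset.card_univ, Fintype.card_fin, nsmul_eq_mul]
  have hn' : (n : ℝ≥0∞) ≠ 0 := by exact_mod_cast hn.ne'
  rw [mul_comm (n : ℝ≥0∞), mul_assoc, ENNReal.inv_mul_cancel hn' (by simp), mul_one]
  rw [add_tsub_cancel_of_le, tsub_add_cancel_of_le]
  · simpa using hj
  · gcongr

noncomputable def base (n j k : ℕ) (hn : 0 < n) (hj : 1 ≤ j) (hjk : j < k) :
    PMF (Option (Option (Fin n))) :=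
  PMF.ofFintype (baseW n j k) (baseW_sum n j k hn hj hjk)

def enc {n : ℕ} (σ : Fin n → Bool) (a : Fin n) : ℕ := 2 * a + (σ a).toNat

theorem enc_inj {n : ℕ} (σ τ : Fin n → Bool) (a b : Fin n) (h : enc σ a = enc τ b) :
    a = b ∧ σ a = τ b := by
  unfold enc at h
  have h1 := (σ a).toNat_lt
  have h2 := (τ b).toNat_lt
  have hab : a = b := by apply Fin.ext; omega
  refine ⟨hab, ?_⟩
  have : (σ a).toNat = (τ b).toNat := by rw [hab] at h ⊢; omega
  revert this
  cases σ a <;> cases τ b <;> simp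

def emb {n : ℕ} (j : ℕ) (i : ℕ) (σ : Fin n → Bool) : Option (Option (Fin n)) → ℕ × ℕ
  | none => (0, 0)
  | some none => (i, 2 * j + 2)
  | some (some a) => (enc σ a, 2 * j + 1)

def setOf' {n : ℕ} (σ : Fin n → Bool) : Finset ℕ := Finset.univ.image (enc σ)

theorem map_apply_eq {n : ℕ} (j k i : ℕ) (hn : 0 < n) (hj : 1 ≤ j) (hjk : j < k)
    (σ : Fin n → Bool) (x : ℕ × ℕ) :
    ((base n j k hn hj hjk).map (emb j i σ)) x =
      (1 - ((j : ℝ≥0∞))⁻¹) * (if x = (0, 0) then 1 else 0)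
      + (((j : ℝ≥0∞))⁻¹ - ((k : ℝ≥0∞))⁻¹) *
          (if x.1 ∈ setOf' σ ∧ x.2 = 2 * j + 1 then (n : ℝ≥0∞)⁻¹ else 0)
      + ((k : ℝ≥0∞))⁻¹ * (if x = (i, 2 * j + 2) then 1 else 0) := by
  classical
  rw [PMF.map_apply, tsum_fintype, Fintype.sum_option, Fintype.sum_option]
  simp only [base, PMF.ofFintype_apply, baseW, emb]
  have key : (∑ a : Fin n, if x = (enc σ a, 2 * j + 1) then
      ((j : ℝ≥0∞)⁻¹ - (k : ℝ≥0∞)⁻¹) * (n : ℝ≥0∞)⁻¹ else 0) =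
      (((j : ℝ≥0∞))⁻¹ - ((k : ℝ≥0∞))⁻¹) *
          (if x.1 ∈ setOf' σ ∧ x.2 = 2 * j + 1 then (n : ℝ≥0∞)⁻¹ else 0) := by
    split_ifs with h
    · obtain ⟨h1, h2⟩ := h
      simp only [setOf', Finset.mem_image, Finset.mem_univ, true_and] at h1
      obtain ⟨a, ha⟩ := h1
      rw [Finset.sum_eq_single a]
      · rw [if_pos]; exact Prod.ext ha.symm h2
      · intro b _ hb
        rw [if_neg]
        intro hx
        apply hb
        have : enc σ b = enc σ a := by rw [ha, hx]
        exact (enc_inj _ _ _ _ this).1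
      · simp
    · rw [mul_zero]
      refine Finset.sum_eq_zero fun a _ => ?_
      rw [if_neg]
      intro hx
      apply h
      rw [hx]
      simp [setOf']
  rw [← key]
  simp only [mul_ite, mul_one, mul_zero]
  rw [add_assoc, add_comm (∑ a : Fin n, _), ← add_assoc, add_assoc]
  refine congrArg₂ _ ?_ (congrArg₂ _ ?_ (Finset.sum_congr rfl fun a _ => ?_)) <;>
    split_ifs with h <;> first | exact if_pos h | exact if_neg h

theorem card_setOf' {n : ℕ} (σ : Fin n → Bool) : (setOf' σ).card = n := by
  unfold setOf'
  rw [Finset.card_image_of_injective]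
  · simp
  · intro a b h; exact (enc_inj _ _ _ _ h).1

theorem mem_Cg (B : ℕ → Finset ℕ) (g : ℕ → ℕ) {n : ℕ} (j i : ℕ) (hn : 0 < n) (hj : 1 ≤ j)
    (hjk : j < g j) (σ : Fin n → Bool) (hi : B i = setOf' σ) :
    (base n j (g j) hn hj hjk).map (emb j i σ) ∈ Cg B g := by
  refine ⟨i, j, hj, hjk, ?_, ?_⟩
  · rw [← Finset.card_pos, hi, card_setOf']; exact hn
  · intro x
    rw [map_apply_eq, hi, card_setOf']

def flipOff {n : ℕ} (S : Multiset (Option (Option (Fin n)))) (σ : Fin n → Bool) : Fin n → Bool :=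
  fun a => if some (some a) ∈ S then σ a else !(σ a)

theorem flipOff_invol {n : ℕ} (S : Multiset (Option (Option (Fin n)))) (σ : Fin n → Bool) :
    flipOff S (flipOff S σ) = σ := by
  funext a
  unfold flipOff
  split_ifs <;> simp

theorem cleanPart_map {n : ℕ} (j i : ℕ) (σ : Fin n → Bool)
    (S : Multiset (Option (Option (Fin n)))) :
    cleanPart j (S.map (emb j i σ)) = (S.filter (fun y => some none ≠ y)).map (emb j i σ) := by
  unfold cleanPart
  rw [Multiset.filter_map]
  congr 1
  refine Multiset.filter_congr fun y _ => ?_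
  rcases y with _ | _ | a <;> simp [emb]

theorem cleanPart_flip {n : ℕ} (j i i' : ℕ) (σ : Fin n → Bool)
    (S : Multiset (Option (Option (Fin n)))) :
    cleanPart j (S.map (emb j i σ)) = cleanPart j (S.map (emb j i' (flipOff S σ))) := by
  rw [cleanPart_map, cleanPart_map]
  refine Multiset.map_congr rfl fun y hy => ?_
  rw [Multiset.mem_filter] at hy
  rcases y with _ | _ | a
  · rfl
  · exact absurd rfl hy.2
  · simp [emb, enc, flipOff, hy.1]

theorem card_filter_count {n : ℕ} (S : Multiset (Option (Option (Fin n)))) :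
    Multiset.card (S.filter (fun y => some none ≠ y)) + S.count (some none) =
      Multiset.card S := by
  rw [Multiset.count, Multiset.countP_eq_card_filter, add_comm, ← Multiset.card_add,
    Multiset.filter_add_not]

theorem unseen_card {n : ℕ} (S : Multiset (Option (Option (Fin n)))) :
    n ≤ Multiset.card S + (Finset.univ.filter (fun a : Fin n => some (some a) ∉ S)).card := by
  classical
  have h := Finset.card_filter_add_card_filter_not (s := (Finset.univ : Finset (Fin n)))
    (fun a => some (some a) ∈ S)
  have h2 : (Finset.univ.filter (fun a : Fin n => some (some a) ∈ S)).card ≤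
      Multiset.card S := by
    refine le_trans ?_ (Multiset.toFinset_card_le S)
    refine Finset.card_le_card_of_injOn (fun a => some (some a)) ?_ ?_
    · intro a ha; simpa using ha
    · intro a _ b _ hab; simpa using hab
  simp only [Finset.card_univ, Fintype.card_fin] at h
  omega

/-- For a sample avoiding too many marked points, the two distributions are far. -/
theorem flip_far {n : ℕ} (j k i i' : ℕ) (hn : 0 < n) (hj : 1 ≤ j) (hjk : j < k)
    (σ : Fin n → Bool) (S : Multiset (Option (Option (Fin n))))
    (hS : 2 * Multiset.card S ≤ n) (a : PMF (ℕ × ℕ)) :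
    ((j : ℝ)⁻¹ - (k : ℝ)⁻¹) / 4 ≤ tv a ((base n j k hn hj hjk).map (emb j i σ)) +
      tv a ((base n j k hn hj hjk).map (emb j i' (flipOff S σ))) := by
  classical
  set U := Finset.univ.filter (fun a : Fin n => some (some a) ∉ S) with hU
  have hUc := unseen_card S
  rw [← hU] at hUc
  set F : Finset (ℕ × ℕ) := U.image (fun a => (enc σ a, 2 * j + 1)) with hF
  have hFc : F.card = U.card := by
    refine Finset.card_image_of_injective _ fun x y h => ?_
    exact (enc_inj σ σ x y (Prod.ext_iff.1 h).1).1
  have hle : (k : ℝ)⁻¹ ≤ (j : ℝ)⁻¹ := by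
    have : (0 : ℝ) < j := by exact_mod_cast hj
    gcongr
  refine le_trans ?_ (tv_tri a _ _ F (((j : ℝ)⁻¹ - (k : ℝ)⁻¹) * (n : ℝ)⁻¹) ?_ ?_)
  · rw [hFc]
    have h1 : (n : ℝ) ≤ 2 * U.card := by
      have : n ≤ 2 * U.card := by omega
      exact_mod_cast this
    have hn' : (0 : ℝ) < n := by exact_mod_cast hn
    have h2 : 1 / 2 ≤ (U.card : ℝ) * (n : ℝ)⁻¹ := by
      rw [← div_eq_mul_inv, le_div_iff₀ hn']; linarith
    have h3 : 0 ≤ (j : ℝ)⁻¹ - (k : ℝ)⁻¹ := by linarith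
    nlinarith
  · intro x hx
    simp only [hF, Finset.mem_image] at hx
    obtain ⟨b, hb, rfl⟩ := hx
    rw [map_apply_eq]
    have hk : (k : ℝ≥0∞)⁻¹ ≤ (j : ℝ≥0∞)⁻¹ := by gcongr
    have hj0 : (j : ℝ≥0∞) ≠ 0 := by exact_mod_cast (by omega : j ≠ 0)
    simp [setOf', ENNReal.toReal_sub_of_le hk (ENNReal.inv_ne_top.2 hj0)]
  · intro x hx
    simp only [hF, Finset.mem_image, hU, Finset.mem_filter, Finset.mem_univ, true_and] at hx
    obtain ⟨b, hb, rfl⟩ := hx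
    rw [map_apply_eq]
    have : enc σ b ∉ setOf' (flipOff S σ) := by
      simp only [setOf', Finset.mem_image, Finset.mem_univ, true_and, not_exists]
      intro c hc
      obtain ⟨rfl, h⟩ := enc_inj _ _ _ _ hc
      simp [flipOff, hb] at h
    simp [this]

open Classical in
/-- On a sample with few marked points at most half of the family is learned. -/
theorem half_good {n : ℕ} (j k : ℕ) (idx : (Fin n → Bool) → ℕ)
    (hn : 0 < n) (hj : 1 ≤ j) (hjk : j < k)
    (A : Multiset (ℕ × ℕ) → PMF (ℕ × ℕ)) (η t : ℝ) (hη : 0 ≤ η)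
    (ht : 2 * t < ((j : ℝ)⁻¹ - (k : ℝ)⁻¹) / 4)
    (S : Multiset (Option (Option (Fin n)))) (hS : 2 * Multiset.card S ≤ n)
    (hcount : (S.count (some none) : ℝ) ≤ η * Multiset.card S) :
    2 * (Finset.univ.filter (fun σ : Fin n → Bool =>
      tv (A (vmap η j (S.map (emb j (idx σ) σ))))
        ((base n j k hn hj hjk).map (emb j (idx σ) σ)) ≤ t)).card ≤ 2 ^ n := by
  set P : (Fin n → Bool) → Prop := fun σ =>
      tv (A (vmap η j (S.map (emb j (idx σ) σ))))
        ((base n j k hn hj hjk).map (emb j (idx σ) σ)) ≤ t with hP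
  have hsplit := Finset.card_filter_add_card_filter_not
    (s := (Finset.univ : Finset (Fin n → Bool))) P
  have hle : (Finset.univ.filter P).card ≤ (Finset.univ.filter (fun σ => ¬ P σ)).card := by
    refine Finset.card_le_card_of_injOn (flipOff S) ?_ ?_
    · intro σ hσ
      simp only [Finset.coe_filter, Finset.mem_univ, true_and, Set.mem_ofPred_eq] at hσ ⊢
      intro hσ'
      have heq : vmap η j (S.map (emb j (idx σ) σ)) =
          vmap η j (S.map (emb j (idx (flipOff S σ)) (flipOff S σ))) := by
        apply vmap_congr
        · simp
        · exact cleanPart_flip _ _ _ _ _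
        · rw [cleanPart_map, Multiset.card_map, Multiset.card_map]
          have h1 := card_filter_count S
          have h2 : S.count (some none) ≤ ⌊η * (Multiset.card S : ℝ)⌋₊ := Nat.le_floor hcount
          unfold cOf
          omega
      simp only [hP] at hσ hσ'
      rw [← heq] at hσ'
      have := flip_far j k (idx σ) (idx (flipOff S σ)) hn hj hjk σ S hS
        (A (vmap η j (S.map (emb j (idx σ) σ))))
      linarith
    · intro σ _ τ _ h
      rw [← flipOff_invol S σ, h, flipOff_invol]
  have hc : (Finset.univ : Finset (Fin n → Bool)).card = 2 ^ n := by simp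
  change 2 * (Finset.univ.filter P).card ≤ 2 ^ n
  omega

open Classical in
theorem universal (B : ℕ → Finset ℕ) (hB : Function.Surjective B) (g : ℕ → ℕ) (α : ℝ)
    (j : ℕ) (hj : 1 ≤ j) (hα : 1 ≤ α) (hk : 512 * α * j ≤ g j) :
    UniversalAdversary (Cg B g) α (fun S => PMF.pure (vmap (8 / g j) j S)) (8 / g j) := by
  rintro ⟨A, mc, hL⟩
  have hj0 : (1 : ℝ) ≤ j := by exact_mod_cast hj
  have hk512 : 512 * (j : ℝ) ≤ g j := by nlinarith
  have hjk : j < g j := by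
    have : (j : ℝ) < g j := by linarith
    exact_mod_cast this
  set k := g j with hkdef
  have hk0 : (0 : ℝ) < k := by linarith
  set η : ℝ := 8 / k with hηdef
  set ε : ℝ := 1 / (64 * j) with hε
  set m := mc ε (1 / 4) + 1 with hm
  set n := 2 * m with hndef
  have hn : 0 < n := by omega
  choose idx hidx using fun σ : Fin n → Bool => hB (setOf' σ)
  set r := base n j k hn hj hjk with hr
  have hε0 : 0 < ε := by positivity
  have hε1 : ε < 1 := by
    rw [hε, div_lt_one (by positivity)]; linarith
  set t : ℝ := α * η + ε with ht
  have hbound : 2 * t < ((j : ℝ)⁻¹ - (k : ℝ)⁻¹) / 4 := by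
    have h1 : α * η ≤ (j : ℝ)⁻¹ / 64 := by
      rw [hηdef, ← mul_div_assoc, div_le_iff₀ hk0]
      have : (j : ℝ)⁻¹ * (512 * α * j) ≤ (j : ℝ)⁻¹ * k := by gcongr
      have e : (j : ℝ)⁻¹ * (512 * α * j) = 512 * α := by field_simp
      linarith
    have h2 : ε = (j : ℝ)⁻¹ / 64 := by rw [hε]; field_simp
    have h3 : (k : ℝ)⁻¹ ≤ (j : ℝ)⁻¹ / 512 := by
      rw [← one_div, div_le_iff₀ hk0]
      have : (j : ℝ)⁻¹ * (512 * j) ≤ (j : ℝ)⁻¹ * k := by gcongr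
      have e : (j : ℝ)⁻¹ * (512 * j) = 512 := by field_simp
      linarith
    have h4 : 0 < (j : ℝ)⁻¹ := by positivity
    linarith
  let G : (Fin n → Bool) → Multiset (Option (Option (Fin n))) → Prop := fun σ S =>
    tv (A (vmap η j (S.map (emb j (idx σ) σ)))) (r.map (emb j (idx σ) σ)) ≤ t
  have hlow : ∀ σ : Fin n → Bool, 1 - ENNReal.ofReal (1 / 4) ≤
      Ex (iid r m) (fun S => if G σ S then 1 else 0) := by
    intro σ
    have h := hL (r.map (emb j (idx σ) σ)) (mem_Cg B g j (idx σ) hn hj hjk σ (hidx σ)) ε (1 / 4)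
      hε0 hε1 (by norm_num) (by norm_num) m (by omega)
    rw [probEvent_eq_Ex, Ex_bind, iid_map, Ex_map] at h
    simp only [Ex_pure, Set.mem_ofPred_eq] at h
    exact h
  have hsum : (2 : ℝ≥0∞) ^ n * (1 - ENNReal.ofReal (1 / 4)) ≤
      Ex (iid r m) (fun S => ∑ σ : Fin n → Bool, if G σ S then 1 else 0) := by
    rw [← Ex_sum]
    have := Finset.card_nsmul_le_sum (Finset.univ : Finset (Fin n → Bool)) _ _
      (fun σ _ => hlow σ)
    simpa using this
  have hup : Ex (iid r m) (fun S => ∑ σ : Fin n → Bool, if G σ S then 1 else 0) ≤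
      Ex (iid r m) (fun S => 2 ^ n / 2 +
        (S.count (some none) : ℝ≥0∞) * (2 ^ n * ENNReal.ofReal (k / (8 * m)))) := by
    refine Ex_mono _ _ _ fun S hS => ?_
    have hcard := iid_card r m S hS
    rw [Finset.sum_boole]
    by_cases hc : (S.count (some none) : ℝ) ≤ η * Multiset.card S
    · have := half_good j k idx hn hj hjk A η t (by positivity) hbound S (by omega) hc
      refine le_trans ?_ le_self_add
      rw [ENNReal.le_div_iff_mul_le (by simp) (by simp), mul_comm]
      exact_mod_cast this
    · refine le_trans ?_ le_add_self
      push Not at hc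
      have h1 : ((Finset.univ.filter (fun σ => G σ S)).card : ℝ≥0∞) ≤ 2 ^ n := by
        have := Finset.card_filter_le (Finset.univ : Finset (Fin n → Bool)) (fun σ => G σ S)
        simp only [Finset.card_univ, Fintype.card_fun, Fintype.card_bool, Fintype.card_fin] at this
        exact_mod_cast this
      refine h1.trans ?_
      rw [mul_left_comm]
      refine le_mul_of_one_le_right (by positivity) ?_
      rw [← ENNReal.ofReal_natCast, ← ENNReal.ofReal_mul (by positivity), ENNReal.one_le_ofReal]
      rw [hcard, hηdef] at hc
      have hm0 : (0 : ℝ) < m := by rw [hm]; positivity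
      calc (1 : ℝ) = 8 / k * m * (k / (8 * m)) := by field_simp
        _ ≤ _ := by gcongr
  rw [Ex_add, Ex_const, Ex_mul_right, Ex_count] at hup
  have hry : r (some none) = ENNReal.ofReal ((k : ℝ)⁻¹) := by
    rw [ENNReal.ofReal_inv_of_pos hk0, ENNReal.ofReal_natCast]
    rfl
  have hfin := hsum.trans hup
  rw [hry] at hfin
  have e1 : (2 : ℝ≥0∞) ^ n = ENNReal.ofReal (2 ^ n) := by
    rw [ENNReal.ofReal_pow (by norm_num)]; simp
  have e2 : (m : ℝ≥0∞) = ENNReal.ofReal m := by simp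
  have e3 : (1 : ℝ≥0∞) - ENNReal.ofReal (1 / 4) = ENNReal.ofReal (3 / 4) := by
    rw [← ENNReal.ofReal_one, ← ENNReal.ofReal_sub _ (by norm_num)]; norm_num
  have e4 : ENNReal.ofReal ((2 : ℝ) ^ n) / 2 = ENNReal.ofReal (2 ^ n / 2) := by
    rw [ENNReal.ofReal_div_of_pos (by norm_num)]; simp
  have hm0 : (0 : ℝ) < m := by rw [hm]; positivity
  rw [e3, e1, e2, e4, ← ENNReal.ofReal_mul (by positivity), ← ENNReal.ofReal_mul (by positivity),
    ← ENNReal.ofReal_mul (by positivity), ← ENNReal.ofReal_mul (by positivity),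
    ← ENNReal.ofReal_add (by positivity) (by positivity),
    ENNReal.ofReal_le_ofReal_iff (by positivity)] at hfin
  have e5 : (m : ℝ) * (k : ℝ)⁻¹ * (2 ^ n * (k / (8 * m))) = 2 ^ n / 8 := by field_simp
  rw [e5] at hfin
  have : (0 : ℝ) < 2 ^ n := by positivity
  linarith

/-- For every superlinear `g` and every `α ≥ 1`, the class `C_g` is not
adaptively subtractively α-robustly learnable; moreover there is an adaptive subtractive
adversary with fixed constant budget that is a universal α-adversary for `C_g`. -/
theorem stmt2 (B : ℕ → Finset ℕ) (hB : Function.Surjective B)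
    (g : ℕ → ℕ) (hg : Superlinear g) (α : ℝ) (hα : 1 ≤ α) :
    ¬ SubtractivelyRobustlyLearnable (Cg B g) α ∧
      ∃ (V : Adversary (ℕ × ℕ)) (η : ℝ), 0 < η ∧ η < 1 ∧ IsSubtractive V ∧
        FixedBudgetSub V η ∧ UniversalAdversary (Cg B g) α V η := by
  obtain ⟨j, hj1, hj2⟩ := ((hg.eventually_ge_atTop (512 * α)).and
    (Filter.eventually_ge_atTop 1)).exists
  have hj0 : (1 : ℝ) ≤ j := by exact_mod_cast hj2
  have hk : 512 * α * j ≤ g j := by rwa [le_div_iff₀ (by linarith)] at hj1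
  have hk8 : (8 : ℝ) < g j := by nlinarith
  have hη0 : (0 : ℝ) < 8 / g j := by positivity
  have hη1 : (8 : ℝ) / g j < 1 := by rw [div_lt_one (by linarith)]; exact hk8
  have hU := universal B hB g α j hj2 hα hk
  have hsub : IsSubtractive (fun S => PMF.pure (vmap (8 / g j) j S)) := by
    intro S T hT
    simp at hT
    rw [hT]
    exact vmap_le _ _ _
  have hfix := vmap_fixed (8 / g j) j hη0 hη1
  refine ⟨?_, _, _, hη0, hη1, hsub, hfix, hU⟩
  rintro ⟨A, mc, h⟩
  exact hU ⟨A, mc, h _ _ hη0 hη1 hsub hfix⟩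
end

section
/- For every α ≥ 1 and every superlinear function g : ℕ → ℕ, the class C_g is neither adaptively additively α-robustly learnable nor adaptively subtractively α-robustly learnable. -/
open scoped ENNReal NNReal

abbrev Sym9 (N : ℕ) := Option (Option (Fin N))

def bs9 {N : ℕ} (σ : Fin N → Bool) : Finset ℕ :=
  Finset.univ.image fun a : Fin N => 2 * (a : ℕ) + (σ a).toNat

def hm9 {N : ℕ} (j i : ℕ) (σ : Fin N → Bool) : Sym9 N → ℕ × ℕ
  | none => (0, 0)
  | some none => (i, 2 * j + 2)
  | some (some a) => (2 * (a : ℕ) + (σ a).toNat, 2 * j + 1)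

lemma elem_inj9 {a b : ℕ} {x y : Bool} (h : 2 * a + x.toNat = 2 * b + y.toNat) :
    a = b ∧ x = y := by
  cases x <;> cases y <;> simp at h ⊢ <;> omega

lemma bs_card9 {N : ℕ} (σ : Fin N → Bool) : (bs9 σ).card = N := by
  unfold bs9
  rw [Finset.card_image_of_injective]
  · simp
  · intro a b h
    exact Fin.ext (elem_inj9 h).1

lemma mem_bs9 {N : ℕ} (σ : Fin N → Bool) (a : Fin N) (x : Bool) :
    2 * (a : ℕ) + x.toNat ∈ bs9 σ ↔ x = σ a := by
  unfold bs9
  simp only [Finset.mem_image, Finset.mem_univ, true_and]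
  constructor
  · rintro ⟨b, hb⟩
    obtain ⟨h1, h2⟩ := elem_inj9 hb
    have := Fin.ext h1
    subst this
    exact h2.symm
  · rintro rfl
    exact ⟨a, rfl⟩

lemma bs_inj9 {N : ℕ} : Function.Injective (bs9 (N := N)) := by
  intro σ τ h
  funext a
  have : 2 * (a : ℕ) + (σ a).toNat ∈ bs9 τ := by
    rw [← h, mem_bs9]
  rwa [mem_bs9] at this

/-- weights of the abstract distribution -/
noncomputable def rw9 (N j k : ℕ) : Sym9 N → ℝ≥0∞
  | none => 1 - (j : ℝ≥0∞)⁻¹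
  | some none => (k : ℝ≥0∞)⁻¹
  | some (some _) => ((j : ℝ≥0∞)⁻¹ - (k : ℝ≥0∞)⁻¹) * (N : ℝ≥0∞)⁻¹

lemma rw_sum9 {N j k : ℕ} (hN : 1 ≤ N) (hj : 1 ≤ j) (hjk : j < k) :
    ∑ s, rw9 N j k s = 1 := by
  rw [Fintype.sum_option, Fintype.sum_option]
  simp only [rw9, Finset.sum_const, Finset.card_univ, Fintype.card_fin, nsmul_eq_mul]
  have hN0 : (N : ℝ≥0∞) ≠ 0 := by simp; omega
  rw [mul_comm, mul_assoc, ENNReal.inv_mul_cancel hN0 (by simp), mul_one]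
  rw [add_tsub_cancel_of_le, tsub_add_cancel_of_le]
  · simpa using hj
  · simp; exact_mod_cast hjk.le

noncomputable def rho9 {N j k : ℕ} (hN : 1 ≤ N) (hj : 1 ≤ j) (hjk : j < k) : PMF (Sym9 N) :=
  PMF.ofFintype (rw9 N j k) (rw_sum9 hN hj hjk)

lemma isP9 (B : ℕ → Finset ℕ) {N j k : ℕ} (hN : 1 ≤ N) (hj : 1 ≤ j) (hjk : j < k)
    (σ : Fin N → Bool) (i : ℕ) (hi : B i = bs9 σ) :
    IsPijk B i j k ((rho9 hN hj hjk).map (hm9 j i σ)) := by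
  intro x
  rw [PMF.map_apply, tsum_fintype, Fintype.sum_option, Fintype.sum_option, hi, bs_card9]
  have key : (∑ a : Fin N, if x = (2 * (a : ℕ) + (σ a).toNat, 2 * j + 1) then
      ((j : ℝ≥0∞)⁻¹ - (k : ℝ≥0∞)⁻¹) * (N : ℝ≥0∞)⁻¹ else 0)
      = ((j : ℝ≥0∞)⁻¹ - (k : ℝ≥0∞)⁻¹) *
          (if x.1 ∈ bs9 σ ∧ x.2 = 2 * j + 1 then (N : ℝ≥0∞)⁻¹ else 0) := by
    split_ifs with h
    · obtain ⟨h1, h2⟩ := h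
      have h1' := h1
      unfold bs9 at h1
      simp only [Finset.mem_image, Finset.mem_univ, true_and] at h1
      obtain ⟨a, ha⟩ := h1
      rw [Finset.sum_eq_single a]
      · rw [if_pos]
        exact Prod.ext ha.symm h2
      · intro b _ hb
        rw [if_neg]
        intro hx
        apply hb
        have : 2 * (b : ℕ) + (σ b).toNat = 2 * (a : ℕ) + (σ a).toNat := by
          rw [ha, hx]
        exact Fin.ext (elem_inj9 this).1
      · simp
    · rw [mul_zero]
      apply Finset.sum_eq_zero
      intro a _
      rw [if_neg]
      rintro rfl
      apply h
      refine ⟨?_, rfl⟩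
      rw [mem_bs9]
  trans (if x = (0, 0) then 1 - (j : ℝ≥0∞)⁻¹ else 0) +
      ((if x = (i, 2 * j + 2) then (k : ℝ≥0∞)⁻¹ else 0) +
        ∑ a : Fin N, if x = (2 * (a : ℕ) + (σ a).toNat, 2 * j + 1) then
          ((j : ℝ≥0∞)⁻¹ - (k : ℝ≥0∞)⁻¹) * (N : ℝ≥0∞)⁻¹ else 0)
  · exact congrArg₂ _ (@if_congr _ _ _ (_) (_) _ _ _ _ Iff.rfl rfl rfl) (congrArg₂ _ (@if_congr _ _ _ (_) (_) _ _ _ _ Iff.rfl rfl rfl)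
      (Finset.sum_congr rfl fun a _ => @if_congr _ _ _ (_) (_) _ _ _ _ Iff.rfl rfl rfl))
  rw [key]
  simp only [mul_ite, mul_one, mul_zero]
  ring

lemma iid_map9 {X Y : Type*} (p : PMF X) (f : X → Y) (m : ℕ) :
    iid (p.map f) m = (iid p m).map (Multiset.map f) := by
  induction m with
  | zero => simp [iid, PMF.pure_map]
  | succ n ih =>
    simp only [iid]
    rw [ih, PMF.map_bind, PMF.bind_map]
    congr 1
    funext s
    simp only [Function.comp, PMF.map_comp]
    congr 1
    funext x
    simp

lemma iid_card9 {X : Type*} (p : PMF X) (m : ℕ) :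
    ∀ w ∈ (iid p m).support, Multiset.card w = m := by
  induction m with
  | zero => intro w hw; simp [iid] at hw; simp [hw]
  | succ n ih =>
    intro w hw
    simp only [iid, PMF.mem_support_bind_iff, PMF.mem_support_map_iff] at hw
    obtain ⟨s, hs, x, _, rfl⟩ := hw
    simp [ih s hs]

noncomputable def ex9 {X : Type*} (p : PMF X) (φ : X → ℝ≥0∞) : ℝ≥0∞ := ∑' x, p x * φ x

lemma ex_bind9 {X Y : Type*} (p : PMF X) (f : X → PMF Y) (φ : Y → ℝ≥0∞) :
    ex9 (p.bind f) φ = ex9 p fun x => ex9 (f x) φ := by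
  simp only [ex9, PMF.bind_apply, ← ENNReal.tsum_mul_right, ← ENNReal.tsum_mul_left]
  rw [ENNReal.tsum_comm]
  simp only [mul_assoc]

lemma ex_pure9 {X : Type*} (x : X) (φ : X → ℝ≥0∞) : ex9 (PMF.pure x) φ = φ x := by
  unfold ex9
  rw [tsum_eq_single x]
  · simp
  · intro y hy; simp [hy]

lemma ex_map9 {X Y : Type*} (p : PMF X) (f : X → Y) (φ : Y → ℝ≥0∞) :
    ex9 (p.map f) φ = ex9 p fun x => φ (f x) := by
  rw [PMF.map, ex_bind9]
  simp [ex_pure9]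

lemma ex_const9 {X : Type*} (p : PMF X) (c : ℝ≥0∞) : ex9 p (fun _ => c) = c := by
  simp [ex9, ENNReal.tsum_mul_right, p.tsum_coe]

lemma ex_add9 {X : Type*} (p : PMF X) (φ ψ : X → ℝ≥0∞) :
    ex9 p (fun x => φ x + ψ x) = ex9 p φ + ex9 p ψ := by
  simp [ex9, mul_add, ENNReal.tsum_add]

lemma ex_mul9 {X : Type*} (p : PMF X) (c : ℝ≥0∞) (ψ : X → ℝ≥0∞) :
    ex9 p (fun x => c * ψ x) = c * ex9 p ψ := by
  simp only [ex9, ← ENNReal.tsum_mul_left]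
  congr 1; funext x; ring

lemma ex_sum9 {X ι : Type*} [Fintype ι] (p : PMF X) (φ : ι → X → ℝ≥0∞) :
    ex9 p (fun x => ∑ i, φ i x) = ∑ i, ex9 p (φ i) := by
  simp only [ex9, Finset.mul_sum]
  rw [Summable.tsum_finsetSum]
  intros; exact ENNReal.summable

lemma ex_mono9 {X : Type*} (p : PMF X) (φ ψ : X → ℝ≥0∞) (h : ∀ x ∈ p.support, φ x ≤ ψ x) :
    ex9 p φ ≤ ex9 p ψ := by
  apply ENNReal.tsum_le_tsum
  intro x
  by_cases hx : x ∈ p.support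
  · gcongr; exact h x hx
  · rw [PMF.mem_support_iff, not_not] at hx
    simp [hx]

lemma ex_count9 {X : Type*} [DecidableEq X] (p : PMF X) (a : X) (m : ℕ) :
    ex9 (iid p m) (fun w => (w.count a : ℝ≥0∞)) = m * p a := by
  induction m with
  | zero => simp [iid, ex_pure9]
  | succ n ih =>
    simp only [iid]
    rw [ex_bind9]
    simp only [ex_map9, Multiset.count_cons, Nat.cast_add, ex_add9, ex_const9, ih]
    have : ex9 p (fun x => (((if a = x then 1 else 0 : ℕ)) : ℝ≥0∞)) = p a := by
      unfold ex9
      rw [tsum_eq_single a]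
      · simp
      · intro b hb; simp [Ne.symm hb]
    rw [this]
    push_cast
    ring

open Classical in
lemma prob_ex9 {X : Type*} (p : PMF X) (E : Set X) :
    probEvent p E = ex9 p fun x => if x ∈ E then 1 else 0 := by
  unfold probEvent ex9
  rw [PMF.toOuterMeasure_apply]
  congr 1; funext x
  by_cases h : x ∈ E <;> simp [h]

lemma pmf_summable9 {X : Type*} (p : PMF X) : Summable fun x => (p x).toReal :=
  ENNReal.summable_toReal (by rw [p.tsum_coe]; simp)

lemma tv_summable9 {X : Type*} (p q : PMF X) :
    Summable fun x => |(p x).toReal - (q x).toReal| :=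
  ((pmf_summable9 p).sub (pmf_summable9 q)).abs

lemma tv_tri9 {X : Type*} (p q r : PMF X) : tv p q ≤ tv r p + tv r q := by
  unfold tv
  rw [← add_div, ← (tv_summable9 r p).tsum_add (tv_summable9 r q)]
  apply div_le_div_of_nonneg_right _ (by norm_num)
  apply Summable.tsum_le_tsum _ (tv_summable9 _ _) ((tv_summable9 r p).add (tv_summable9 r q))
  intro x
  rw [abs_sub_comm (r x).toReal (p x).toReal]
  exact abs_sub_le _ _ _

lemma tv_lower9 {X ι : Type*} (p q : PMF X) (s : Finset ι) (f : ι → X)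
    (hf : Function.Injective f) (c : ℝ)
    (h : ∀ a ∈ s, c ≤ |(p (f a)).toReal - (q (f a)).toReal|) : s.card * c / 2 ≤ tv p q := by
  unfold tv
  gcongr
  calc (s.card : ℝ) * c = ∑ a ∈ s, c := by simp
    _ ≤ ∑ a ∈ s, |(p (f a)).toReal - (q (f a)).toReal| := Finset.sum_le_sum h
    _ = ∑ x ∈ s.map ⟨f, hf⟩, |(p x).toReal - (q x).toReal| := by simp
    _ ≤ _ := (tv_summable9 p q).sum_le_tsum _ (fun _ _ => abs_nonneg _)

open Classical in
/-- flip all coordinates not seen -/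
noncomputable def flip9 {N : ℕ} (D : Set (Fin N)) (σ : Fin N → Bool) : Fin N → Bool :=
  fun a => if a ∈ D then σ a else !(σ a)

lemma flip_flip9 {N : ℕ} (D : Set (Fin N)) (σ : Fin N → Bool) : flip9 D (flip9 D σ) = σ := by
  funext a
  by_cases h : a ∈ D <;> simp [flip9, h]

noncomputable def flipE9 {N : ℕ} (D : Set (Fin N)) : (Fin N → Bool) ≃ (Fin N → Bool) :=
  ⟨flip9 D, flip9 D, flip_flip9 D, flip_flip9 D⟩

def seen9 {N : ℕ} (w : Multiset (Sym9 N)) : Set (Fin N) := {a | some (some a) ∈ w}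

open Classical in
lemma core9 {N m r : ℕ} (μ : PMF (Multiset (Sym9 N)))
    (hμ : ∀ w ∈ μ.support, Multiset.card w = m)
    (hbad : ex9 μ (fun w => if w.count (some none) ≤ r then 0 else 1) ≤ 1 / 4)
    (G : (Fin N → Bool) → Multiset (Sym9 N) → Prop)
    (hG : ∀ w, Multiset.card w = m → w.count (some none) ≤ r → ∀ σ,
      G σ w → ¬ G (flip9 (seen9 w) σ) w)
    (hall : ∀ σ, 7 / 8 ≤ ex9 μ (fun w => if G σ w then 1 else 0)) : False := by
  have le1 : ∀ (P : Prop) [Decidable P], (if P then 1 else 0 : ℝ≥0∞) ≤ 1 := by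
    intro P _
    split_ifs <;> simp
  set K : ℝ≥0∞ := (Fintype.card (Fin N → Bool) : ℝ≥0∞) with hK
  have hK0 : K ≠ 0 := by simp [hK]
  have hKt : K ≠ ⊤ := by simp [hK]
  have h1 : K * (7 / 8) ≤ ∑ σ, ex9 μ (fun w => if G σ w then 1 else 0) := by
    calc K * (7/8) = ∑ σ : Fin N → Bool, (7 / 8 : ℝ≥0∞) := by
          rw [Finset.sum_const, nsmul_eq_mul, hK, Finset.card_univ]
      _ ≤ _ := Finset.sum_le_sum fun σ _ => hall σ
  have h2 : 2 * ∑ σ, ex9 μ (fun w => if G σ w then 1 else 0) ≤ K * (1 + 1 / 4) := by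
    rw [← ex_sum9, ← ex_mul9]
    calc _ ≤ ex9 μ (fun w => K * (1 + if w.count (some none) ≤ r then 0 else 1)) := by
          apply ex_mono9
          intro w hw
          have hw := hμ w hw
          rw [two_mul]
          nth_rewrite 2 [← Equiv.sum_comp (flipE9 (seen9 w))]
          rw [← Finset.sum_add_distrib]
          calc _ ≤ ∑ σ : Fin N → Bool, (1 + if w.count (some none) ≤ r then 0 else 1 : ℝ≥0∞) := by
                apply Finset.sum_le_sum
                intro σ _
                by_cases hr : w.count (some none) ≤ r
                · have := hG w hw hr σ
                  simp only [flipE9, Equiv.coe_fn_mk, hr, if_true, add_zero]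
                  by_cases g1 : G σ w
                  · simp [g1, this g1]
                  · simp only [g1, if_false, zero_add]
                    exact le1 _
                · simp only [hr, if_false]
                  gcongr <;> split_ifs <;> simp
            _ = _ := by rw [Finset.sum_const, nsmul_eq_mul, hK, Finset.card_univ]
      _ ≤ _ := by
        rw [ex_mul9, ex_add9, ex_const9]
        gcongr
  have h3 : K * (2 * (7 / 8)) ≤ K * (1 + 1 / 4) := by
    calc K * (2 * (7 / 8)) = 2 * (K * (7 / 8)) := by ring
      _ ≤ _ := by gcongr
      _ ≤ _ := h2
  rw [ENNReal.mul_le_mul_iff_right hK0 hKt] at h3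
  have h4 := ENNReal.toReal_mono (by finiteness) h3
  rw [ENNReal.toReal_add (by simp) (by simp)] at h4
  simp at h4
  norm_num at h4

lemma bad9 {N j k m : ℕ} (hN : 1 ≤ N) (hj : 1 ≤ j) (hjk : j < k) :
    ex9 (iid (rho9 hN hj hjk) m)
      (fun w => if w.count (some none) ≤ ⌊(4 / k : ℝ) * m⌋₊ then 0 else 1) ≤ 1 / 4 := by
  by_cases hm : m = 0
  · subst hm
    simp [iid, ex_pure9]
  have hk0 : (0 : ℝ) < k := by exact_mod_cast (by omega : 0 < k)
  have hm0 : (0 : ℝ) < m := by exact_mod_cast (by omega : 0 < m)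
  have h := ex_count9 (rho9 hN hj hjk) (some none) m
  have hle : ENNReal.ofReal (4 / k * m) * ex9 (iid (rho9 hN hj hjk) m)
      (fun w => if w.count (some none) ≤ ⌊(4 / k : ℝ) * m⌋₊ then 0 else 1)
      ≤ m * (rho9 hN hj hjk) (some none) := by
    rw [← h, ← ex_mul9]
    apply ex_mono9
    intro w _
    split_ifs with hc
    · simp
    · rw [mul_one]
      apply ENNReal.ofReal_le_of_le_toReal
      simp only [ENNReal.toReal_natCast]
      push Not at hc
      exact (Nat.lt_of_floor_lt hc).le
  have e : (m : ℝ≥0∞) * (rho9 hN hj hjk) (some none) = ENNReal.ofReal (4 / k * m) * (1 / 4) := by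
    simp only [rho9, PMF.ofFintype_apply, rw9]
    rw [← ENNReal.toReal_eq_toReal_iff']
    · simp only [ENNReal.toReal_mul, ENNReal.toReal_natCast, ENNReal.toReal_inv]
      rw [ENNReal.toReal_ofReal (by positivity)]
      simp
      field_simp
    · apply ENNReal.mul_ne_top (by simp)
      simp; omega
    · finiteness
  rw [e, ENNReal.mul_le_mul_iff_right] at hle
  · exact hle
  · simp; positivity
  · simp

lemma far9 {N j k m : ℕ} (hN : 1 ≤ N) (hj : 1 ≤ j) (hjk : j < k) (hNm : N = 2 * m)
    (B : ℕ → Finset ℕ)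
    (idx : (Fin N → Bool) → ℕ) (hidx : ∀ σ, B (idx σ) = bs9 σ)
    (w : Multiset (Sym9 N)) (hw : Multiset.card w = m) (σ : Fin N → Bool) :
    ((1 : ℝ) / j - 1 / k) / 4 ≤
      tv ((rho9 hN hj hjk).map (hm9 j (idx σ) σ))
        ((rho9 hN hj hjk).map (hm9 j (idx (flip9 (seen9 w) σ)) (flip9 (seen9 w) σ))) := by
  classical
  set τ := flip9 (seen9 w) σ with hτ
  set s : Finset (Fin N) := (Finset.univ.filter fun a => a ∈ seen9 w)ᶜ with hs
  have hcard : m ≤ s.card := by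
    have h1 : (Finset.univ.filter fun a => a ∈ seen9 w).card ≤ m := by
      rw [← hw]
      calc _ = ((Finset.univ.filter fun a => a ∈ seen9 w).image
              (fun a => (some (some a) : Sym9 N))).card := by
            rw [Finset.card_image_of_injective]
            intro a b h; simpa using h
        _ ≤ w.toFinset.card := by
            apply Finset.card_le_card
            intro x hx
            simp only [Finset.mem_image, Finset.mem_filter, Finset.mem_univ, true_and] at hx
            obtain ⟨a, ha, rfl⟩ := hx
            simpa [seen9] using ha
        _ ≤ _ := Multiset.toFinset_card_le w
    rw [hs, Finset.card_compl, Fintype.card_fin]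
    omega
  have hjp : (0 : ℝ) < j := by exact_mod_cast hj
  have hc : (0 : ℝ) ≤ (1 : ℝ) / j - 1 / k := by
    rw [sub_nonneg]
    apply one_div_le_one_div_of_le hjp
    exact_mod_cast hjk.le
  have hNp : (0 : ℝ) < N := by exact_mod_cast hN
  have hl := tv_lower9 ((rho9 hN hj hjk).map (hm9 j (idx σ) σ))
    ((rho9 hN hj hjk).map (hm9 j (idx τ) τ)) s
    (fun a => (2 * (a : ℕ) + (σ a).toNat, 2 * j + 1))
    (by intro a b h
        exact Fin.ext (elem_inj9 (Prod.ext_iff.1 h).1).1) (((1 : ℝ) / j - 1 / k) / N) (by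
    intro a ha
    have ha' : a ∉ seen9 w := by simpa [hs] using ha
    have hp := isP9 B hN hj hjk σ (idx σ) (hidx σ) (2 * (a : ℕ) + (σ a).toNat, 2 * j + 1)
    have hq := isP9 B hN hj hjk τ (idx τ) (hidx τ) (2 * (a : ℕ) + (σ a).toNat, 2 * j + 1)
    rw [hidx, bs_card9] at hp hq
    have e1 : σ a ≠ τ a := by simp [hτ, flip9, ha']
    simp only [mem_bs9, e1] at hp hq
    simp [-PMF.map_apply] at hp hq
    rw [hp, hq]
    have : ((j : ℝ≥0∞)⁻¹ - (k : ℝ≥0∞)⁻¹).toReal = 1 / (j : ℝ) - 1 / k := by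
      rw [ENNReal.toReal_sub_of_le]
      · simp
      · simp; exact_mod_cast hjk.le
      · simp; omega
    simp only [ENNReal.toReal_mul, this, ENNReal.toReal_inv, ENNReal.toReal_natCast,
      ENNReal.toReal_zero, sub_zero]
    rw [div_eq_mul_inv _ (N : ℝ)]
    exact le_abs_self _)
  refine le_trans ?_ hl
  have : (m : ℝ) ≤ s.card := by exact_mod_cast hcard
  calc ((1 : ℝ) / j - 1 / k) / 4 = m * (((1 : ℝ) / j - 1 / k) / N) / 2 := by
        rw [hNm] at hNp ⊢
        push_cast at hNp ⊢
        have : (m : ℝ) ≠ 0 := by rintro h; simp [h] at hNp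
        field_simp
        norm_num
    _ ≤ _ := by gcongr

open Classical in
/-- Contradiction from a deterministic confusing adversary. -/
lemma contra9 (B : ℕ → Finset ℕ) (g : ℕ → ℕ) (α : ℝ) {N j m : ℕ}
    (hN : 1 ≤ N) (hj : 1 ≤ j) (hjk : j < g j) (hNm : N = 2 * m)
    (hbig : (32 * α + 9) * j < g j) (h4 : 4 < g j)
    (idx : (Fin N → Bool) → ℕ) (hidx : ∀ σ, B (idx σ) = bs9 σ)
    (A : Multiset (ℕ × ℕ) → PMF (ℕ × ℕ)) (mc : ℝ → ℝ → ℕ)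
    (hmc : mc (1 / g j) (1 / 8) ≤ m)
    (v : Multiset (ℕ × ℕ) → Multiset (ℕ × ℕ))
    (hv : ∀ w, Multiset.card w = m → w.count (some none) ≤ ⌊(4 / g j : ℝ) * m⌋₊ → ∀ σ,
      v (w.map (hm9 j (idx σ) σ)) =
        v (w.map (hm9 j (idx (flip9 (seen9 w) σ)) (flip9 (seen9 w) σ))))
    (hL : RobustLearnerFor (Cg B g) A mc (fun S => PMF.pure (v S)) (α * (4 / g j))) : False := by
  have hk4 : (4 : ℝ) < g j := by exact_mod_cast h4
  have hk0 : (0 : ℝ) < g j := by linarith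
  have hj0 : (0 : ℝ) < j := by exact_mod_cast hj
  refine core9 (m := m) (iid (rho9 hN hj hjk) m) (iid_card9 _ m) (bad9 hN hj hjk)
    (fun σ w => tv (A (v (w.map (hm9 j (idx σ) σ)))) ((rho9 hN hj hjk).map (hm9 j (idx σ) σ))
      ≤ α * (4 / g j) + 1 / g j) ?_ ?_
  · intro w hw hc σ h1 h2
    rw [← hv w hw hc σ] at h2
    have h3 := far9 hN hj hjk hNm B idx hidx w hw σ
    have h5 := tv_tri9 ((rho9 hN hj hjk).map (hm9 j (idx σ) σ))
        ((rho9 hN hj hjk).map (hm9 j (idx (flip9 (seen9 w) σ)) (flip9 (seen9 w) σ)))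
        (A (v (w.map (hm9 j (idx σ) σ))))
    have h6 : ((1 : ℝ) / j - 1 / g j) / 4 ≤ 2 * (α * (4 / g j) + 1 / g j) := by linarith
    have h7 : (32 * α + 9) / g j < 1 / j := by
      rw [div_lt_div_iff₀ hk0 hj0]; linarith
    have h8 : (32 * α + 9) / g j = 32 * (α / g j) + 9 * (1 / g j) := by ring
    have h9 : α * (4 / g j) = 4 * (α / g j) := by ring
    rw [h8] at h7
    rw [h9] at h6
    linarith
  · intro σ
    have := hL _ ⟨idx σ, j, hj, hjk, by
        rw [hidx, ← Finset.card_pos, bs_card9]; exact hN,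
        isP9 B hN hj hjk σ (idx σ) (hidx σ)⟩ (1 / g j) (1 / 8) (by positivity)
        (by rw [div_lt_one hk0]; linarith) (by norm_num) (by norm_num) m hmc
    rw [prob_ex9, iid_map9, ex_bind9, ex_map9] at this
    simp only [ex_pure9, Set.mem_ofPred_eq] at this
    refine le_trans ?_ this
    have h18 : ENNReal.ofReal (1 / 8) = 1 / 8 := by
      rw [ENNReal.ofReal_div_of_pos (by norm_num)]; simp
    rw [h18]
    apply ENNReal.le_sub_of_add_le_right (by finiteness)
    rw [← ENNReal.add_div]
    norm_num

/-- the part of a mapped sample -/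
lemma map_filter_ne9 {N j : ℕ} (i i' : ℕ) (w : Multiset (Sym9 N)) (σ : Fin N → Bool) :
    (w.map (hm9 j i σ)).filter (fun x => x.2 ≠ 2 * j + 2) =
      (w.map (hm9 j i' (flip9 (seen9 w) σ))).filter (fun x => x.2 ≠ 2 * j + 2) := by
  rw [Multiset.filter_map, Multiset.filter_map]
  have : w.filter ((fun x : ℕ × ℕ => x.2 ≠ 2 * j + 2) ∘ hm9 j i σ) =
      w.filter ((fun x : ℕ × ℕ => x.2 ≠ 2 * j + 2) ∘ hm9 j i' (flip9 (seen9 w) σ)) := by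
    apply Multiset.filter_congr
    rintro (_ | _ | a) _ <;> simp [hm9]
  rw [this]
  apply Multiset.map_congr rfl
  intro x hx
  rw [Multiset.mem_filter] at hx
  obtain ⟨hx, hx2⟩ := hx
  rcases x with _ | _ | a
  · rfl
  · simp [hm9] at hx2
  · have : a ∈ seen9 w := hx
    simp [hm9, flip9, this]

lemma map_filter_eq9 {N j : ℕ} (i : ℕ) (w : Multiset (Sym9 N)) (σ : Fin N → Bool) :
    (w.map (hm9 j i σ)).filter (fun x => x.2 = 2 * j + 2) =
      Multiset.replicate (w.count (some none)) (i, 2 * j + 2) := by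
  induction w using Multiset.induction_on with
  | empty => simp
  | cons a s ih =>
    rcases a with _ | _ | a <;> simp [hm9, ih, Multiset.count_cons]

lemma seen_map9 {N j : ℕ} (i : ℕ) (w : Multiset (Sym9 N)) (σ : Fin N → Bool) :
    {a : Fin N | ∃ b : Bool, (2 * (a : ℕ) + b.toNat, 2 * j + 1) ∈ w.map (hm9 j i σ)} = seen9 w := by
  ext a
  simp only [Set.mem_ofPred_eq, Multiset.mem_map, seen9]
  constructor
  · rintro ⟨b, x, hx, he⟩
    rcases x with _ | _ | c
    · simp [hm9] at he
    · simp [hm9] at he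
    · have h1 := (elem_inj9 (Prod.ext_iff.1 he).1).1
      have := Fin.ext h1
      subst this
      exact hx
  · intro h
    exact ⟨σ a, _, h, rfl⟩

noncomputable def fake9 {N : ℕ} (j : ℕ) (idx : (Fin N → Bool) → ℕ) (S : Multiset (ℕ × ℕ))
    (x : ℕ × ℕ) : ℕ × ℕ :=
  (idx (flip9 {a : Fin N | ∃ b : Bool, (2 * (a : ℕ) + b.toNat, 2 * j + 1) ∈ S}
    (Function.invFun idx x.1)), 2 * j + 2)

noncomputable def vadd9 {N : ℕ} (j : ℕ) (η : ℝ) (idx : (Fin N → Bool) → ℕ)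
    (S : Multiset (ℕ × ℕ)) : Multiset (ℕ × ℕ) :=
  S + if Multiset.card (S.filter fun x => x.2 = 2 * j + 2) ≤ ⌊η * Multiset.card S⌋₊ then
    (S.filter fun x => x.2 = 2 * j + 2).map (fake9 j idx S) +
      Multiset.replicate (⌊η * Multiset.card S⌋₊ -
        Multiset.card (S.filter fun x => x.2 = 2 * j + 2)) (0, 0)
  else Multiset.replicate ⌊η * Multiset.card S⌋₊ (0, 0)

noncomputable def vsub9 (j : ℕ) (η : ℝ) (S : Multiset (ℕ × ℕ)) : Multiset (ℕ × ℕ) :=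
  if Multiset.card S - ⌊η * Multiset.card S⌋₊ ≤
      Multiset.card (S.filter fun x => x.2 ≠ 2 * j + 2) then
    ((S.filter fun x => x.2 ≠ 2 * j + 2).toList.take
      (Multiset.card S - ⌊η * Multiset.card S⌋₊) : List (ℕ × ℕ))
  else (S.toList.take (Multiset.card S - ⌊η * Multiset.card S⌋₊) : List (ℕ × ℕ))

lemma take_le9 {X : Type*} (S : Multiset X) (t : ℕ) : ((S.toList.take t : List X) : Multiset X) ≤ S := by
  conv_rhs => rw [← S.coe_toList]
  exact (List.take_sublist _ _).subperm

lemma vsub_le9 (j : ℕ) (η : ℝ) (S : Multiset (ℕ × ℕ)) : vsub9 j η S ≤ S := by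
  unfold vsub9
  split_ifs
  · exact (take_le9 _ _).trans (Multiset.filter_le _ _)
  · exact take_le9 _ _

lemma vsub_card9 (j : ℕ) (η : ℝ) (S : Multiset (ℕ × ℕ)) :
    Multiset.card (vsub9 j η S) = Multiset.card S - ⌊η * Multiset.card S⌋₊ := by
  unfold vsub9
  split_ifs with h
  · rw [Multiset.coe_card, List.length_take, Multiset.length_toList]
    omega
  · rw [Multiset.coe_card, List.length_take, Multiset.length_toList]
    omega

lemma vadd_card9 {N : ℕ} (j : ℕ) (η : ℝ) (idx : (Fin N → Bool) → ℕ) (S : Multiset (ℕ × ℕ)) :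
    Multiset.card (vadd9 j η idx S) = Multiset.card S + ⌊η * Multiset.card S⌋₊ := by
  unfold vadd9
  rw [Multiset.card_add]
  split_ifs with h
  · rw [Multiset.card_add, Multiset.card_map, Multiset.card_replicate]
    omega
  · simp

lemma vsub_inv9 {N j : ℕ} (η : ℝ) (i i' : ℕ) (w : Multiset (Sym9 N)) (σ : Fin N → Bool)
    (hc : w.count (some none) ≤ ⌊η * Multiset.card w⌋₊) :
    vsub9 j η (w.map (hm9 j i σ)) = vsub9 j η (w.map (hm9 j i' (flip9 (seen9 w) σ))) := by
  have key : ∀ (i : ℕ) (σ : Fin N → Bool), Multiset.card w - ⌊η * Multiset.card w⌋₊ ≤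
      Multiset.card ((w.map (hm9 j i σ)).filter fun x => x.2 ≠ 2 * j + 2) := by
    intro i σ
    have h1 := congrArg Multiset.card
      (Multiset.filter_add_not (fun x : ℕ × ℕ => x.2 = 2 * j + 2) (w.map (hm9 j i σ)))
    rw [Multiset.card_add, map_filter_eq9, Multiset.card_replicate, Multiset.card_map] at h1
    simp only [ne_eq]
    omega
  unfold vsub9
  simp only [Multiset.card_map]
  rw [if_pos (key i σ), if_pos (key i' _), map_filter_ne9 i i']

lemma vadd_inv9 {N j : ℕ} (η : ℝ) (idx : (Fin N → Bool) → ℕ) (hinj : Function.Injective idx)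
    (w : Multiset (Sym9 N)) (σ : Fin N → Bool)
    (hc : w.count (some none) ≤ ⌊η * Multiset.card w⌋₊) :
    vadd9 j η idx (w.map (hm9 j (idx σ) σ)) =
      vadd9 j η idx (w.map (hm9 j (idx (flip9 (seen9 w) σ)) (flip9 (seen9 w) σ))) := by
  unfold vadd9
  simp only [map_filter_eq9, Multiset.card_map, Multiset.card_replicate, hc, if_true,
    Multiset.map_replicate, fake9, seen_map9, Function.leftInverse_invFun hinj _, flip_flip9]
  have h1 := Multiset.filter_add_not (fun x : ℕ × ℕ => x.2 = 2 * j + 2) (w.map (hm9 j (idx σ) σ))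
  have h2 := Multiset.filter_add_not (fun x : ℕ × ℕ => x.2 = 2 * j + 2)
    (w.map (hm9 j (idx (flip9 (seen9 w) σ)) (flip9 (seen9 w) σ)))
  have h3 := map_filter_ne9 (j := j) (idx σ) (idx (flip9 (seen9 w) σ)) w σ
  simp only [ne_eq] at h3
  rw [← h1, ← h2, h3, map_filter_eq9, map_filter_eq9]
  abel

lemma params9 (g : ℕ → ℕ) (hg : Superlinear g) (α : ℝ) (hα : 1 ≤ α) :
    ∃ j, 1 ≤ j ∧ j < g j ∧ (32 * α + 9) * j < g j ∧ 4 < g j := by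
  obtain ⟨j, h1, h2⟩ := ((hg.eventually_gt_atTop (32 * α + 9)).and
    (Filter.eventually_ge_atTop 1)).exists
  have hj : (1 : ℝ) ≤ j := by exact_mod_cast h2
  rw [lt_div_iff₀ (by linarith)] at h1
  refine ⟨j, h2, ?_, h1, ?_⟩
  · have : (j : ℝ) < g j := by nlinarith
    exact_mod_cast this
  · have : (4 : ℝ) < g j := by nlinarith
    exact_mod_cast this

/-- For every `α ≥ 1` and every superlinear `g`, the class `C_g` is neither
adaptively additively nor adaptively subtractively α-robustly learnable. -/
theorem stmt9 (B : ℕ → Finset ℕ) (hB : Function.Surjective B)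
    (g : ℕ → ℕ) (hg : Superlinear g) (α : ℝ) (hα : 1 ≤ α) :
    ¬ AdditivelyRobustlyLearnable (Cg B g) α ∧
      ¬ SubtractivelyRobustlyLearnable (Cg B g) α := by
  obtain ⟨j, hj, hjk, hbig, h4⟩ := params9 g hg α hα
  have hk4 : (4 : ℝ) < g j := by exact_mod_cast h4
  have hk0 : (0 : ℝ) < g j := by linarith
  have hη0 : (0 : ℝ) < 4 / g j := by positivity
  have hη1 : (4 : ℝ) / g j < 1 := by rw [div_lt_one hk0]; exact hk4
  constructor
  · rintro ⟨A, mc, h⟩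
    set m := max 1 (mc (1 / g j) (1 / 8)) with hm
    have hm1 : 1 ≤ m := le_max_left _ _
    let idx : (Fin (2 * m) → Bool) → ℕ := fun σ => Function.surjInv hB (bs9 σ)
    have hidx : ∀ σ, B (idx σ) = bs9 σ := fun σ => Function.surjInv_eq hB _
    have hinj : Function.Injective idx := fun σ τ e => bs_inj9 (by rw [← hidx, ← hidx, e])
    refine contra9 B g α (N := 2 * m) (by omega) hj hjk rfl hbig h4 idx hidx A mc
      (le_max_right _ _) (vadd9 j (4 / g j) idx) ?_ (h _ _ hη0 hη1 ?_ ?_)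
    · intro w hw hc σ
      exact vadd_inv9 _ idx hinj w σ (hc.trans_eq (by rw [hw]))
    · intro S T hT
      rw [PMF.support_pure, Set.mem_singleton_iff] at hT
      rw [hT]
      exact Multiset.le_add_right _ _
    · refine ⟨fun m => m + ⌊(4 / g j : ℝ) * m⌋₊, ?_, ?_⟩
      · intro S T hT
        rw [PMF.support_pure, Set.mem_singleton_iff] at hT
        rw [hT, vadd_card9]
      · intro n
        have h1 := Nat.floor_le (a := (4 / g j : ℝ) * n) (by positivity)
        have h2 := Nat.lt_floor_add_one ((4 / g j : ℝ) * n)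
        push_cast
        constructor <;> linarith
  · rintro ⟨A, mc, h⟩
    set m := max 1 (mc (1 / g j) (1 / 8)) with hm
    have hm1 : 1 ≤ m := le_max_left _ _
    let idx : (Fin (2 * m) → Bool) → ℕ := fun σ => Function.surjInv hB (bs9 σ)
    have hidx : ∀ σ, B (idx σ) = bs9 σ := fun σ => Function.surjInv_eq hB _
    refine contra9 B g α (N := 2 * m) (by omega) hj hjk rfl hbig h4 idx hidx A mc
      (le_max_right _ _) (vsub9 j (4 / g j)) ?_ (h _ _ hη0 hη1 ?_ ?_)
    · intro w hw hc σ
      exact vsub_inv9 _ _ _ w σ (hc.trans_eq (by rw [hw]))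
    · intro S T hT
      rw [PMF.support_pure, Set.mem_singleton_iff] at hT
      rw [hT]
      exact vsub_le9 _ _ _
    · refine ⟨fun m => m - ⌊(4 / g j : ℝ) * m⌋₊, ?_, ?_⟩
      · intro S T hT
        rw [PMF.support_pure, Set.mem_singleton_iff] at hT
        rw [hT, vsub_card9]
      · intro n
        have h1 := Nat.floor_le (a := (4 / g j : ℝ) * n) (by positivity)
        have h2 := Nat.lt_floor_add_one ((4 / g j : ℝ) * n)
        have h3 : ⌊(4 / g j : ℝ) * n⌋₊ ≤ n := by
          have : ((⌊(4 / g j : ℝ) * n⌋₊ : ℕ) : ℝ) ≤ n :=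
            h1.trans (mul_le_of_le_one_left (by positivity) hη1.le)
          exact_mod_cast this
        rw [Nat.cast_sub h3]
        constructor <;> linarith
end
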